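/- For c ∈ ℂ, the homogeneous polynomial P − cQ is irreducible in ℂ[x,y,z] if and only if c ∉ {0, 1}; that is, among the fibers of F over ℂ = ℙ¹ \ {∞}, exactly the fibers over 0 and 1 are reducible. -/

import Mathlib

open MvPolynomial

/-- The linear form `R_k = (2d+1-k)x + ky - k(2d+1-k)z` in `ℂ[x,y,z]`. -/
noncomputable def R3 (d k : ℕ) : MvPolynomial (Fin 3) ℂ :=
  C (2*(d:ℂ)+1-(k:ℂ)) * X 0 + C (k:ℂ) * X 1 - C ((k:ℂ)*(2*(d:ℂ)+1-(k:ℂ))) * X 2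

/-- `P = ∏_{k=0}^{d} R_k`. -/
noncomputable def P3 (d : ℕ) : MvPolynomial (Fin 3) ℂ :=
  ∏ k ∈ Finset.range (d+1), R3 d k

/-- `Q = ∏_{k=d+1}^{2d+1} R_k`. -/
noncomputable def Q3 (d : ℕ) : MvPolynomial (Fin 3) ℂ :=
  ∏ k ∈ Finset.Icc (d+1) (2*d+1), R3 d k

/-- `∏_{k=0}^d (X - k)`. -/
noncomputable def pp (d : ℕ) : Polynomial ℝ :=
  ∏ k ∈ Finset.range (d+1), (Polynomial.X - Polynomial.C (k:ℝ))

/-- `∏_{k=0}^d ((2d+1-k) - X)`. -/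
noncomputable def qq (d : ℕ) : Polynomial ℝ :=
  ∏ k ∈ Finset.range (d+1), (Polynomial.C (2*(d:ℝ)+1-(k:ℝ)) - Polynomial.X)

theorem pp_eval (d : ℕ) (x : ℝ) :
    (pp d).eval x = ∏ k ∈ Finset.range (d+1), (x - (k:ℝ)) := by
  simp [pp, Polynomial.eval_prod]

theorem qq_eval (d : ℕ) (x : ℝ) :
    (qq d).eval x = ∏ k ∈ Finset.range (d+1), (2*(d:ℝ)+1-(k:ℝ) - x) := by
  simp [qq, Polynomial.eval_prod]

theorem mem_range_le {d k : ℕ} (hk : k ∈ Finset.range (d+1)) : (k:ℝ) ≤ d := by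
  have : k ≤ d := by simpa [Nat.lt_succ_iff] using hk
  exact_mod_cast this

theorem qq_pos (d : ℕ) (x : ℝ) (hx : x < d+1) : 0 < (qq d).eval x := by
  rw [qq_eval]
  apply Finset.prod_pos
  intro k hk
  have := mem_range_le hk
  linarith

theorem pp_pos (d : ℕ) (x : ℝ) (hx : (d:ℝ) < x) : 0 < (pp d).eval x := by
  rw [pp_eval]
  apply Finset.prod_pos
  intro k hk
  have := mem_range_le hk
  linarith

theorem pp_neg (d : ℕ) (x : ℝ) (hx : (d:ℝ) - 1 < x) (hx' : x < d) : (pp d).eval x < 0 := by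
  rw [pp_eval, Finset.prod_range_succ]
  apply mul_neg_of_pos_of_neg _ (by linarith)
  apply Finset.prod_pos
  intro k hk
  have h1 : k + 1 ≤ d := Finset.mem_range.mp hk
  have h2 : ((k:ℝ) + 1) ≤ d := by exact_mod_cast h1
  linarith

theorem pp_zero (d : ℕ) (i : ℕ) (hi : i ≤ d) : (pp d).eval (i:ℝ) = 0 := by
  rw [pp_eval]
  exact Finset.prod_eq_zero (i := i) (by simp; omega) (by simp)

theorem pp_root (d : ℕ) (x : ℝ) (h : (pp d).eval x = 0) : ∃ k : ℕ, k ≤ d ∧ x = k := by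
  rw [pp_eval, Finset.prod_eq_zero_iff] at h
  obtain ⟨k, hk, h⟩ := h
  exact ⟨k, by simpa [Nat.lt_succ_iff] using hk, by linarith⟩

theorem pp_symm (d : ℕ) (x : ℝ) : |(pp d).eval (d - x)| = |(pp d).eval x| := by
  rw [pp_eval, pp_eval, Finset.abs_prod, Finset.abs_prod, ← Finset.prod_range_reflect]
  apply Finset.prod_congr rfl
  intro k hk
  have hk' : k ≤ d := by simpa [Nat.lt_succ_iff] using hk
  rw [show d + 1 - 1 - k = d - k by omega, Nat.cast_sub hk', abs_sub_comm]
  congr 1; ring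

theorem pp_shift (d : ℕ) (x : ℝ) :
    (pp d).eval (x+1) * (x - d) = (x+1) * (pp d).eval x := by
  rw [pp_eval, pp_eval, Finset.prod_range_succ', Finset.prod_range_succ]
  push_cast
  simp only [add_sub_add_right_eq_sub]
  ring

theorem qq_anti (d : ℕ) (x y : ℝ) (hxy : x < y) (hy : y < d + 1) :
    (qq d).eval y < (qq d).eval x := by
  rw [qq_eval, qq_eval]
  apply Finset.prod_lt_prod_of_nonempty
  · intro k hk
    have := mem_range_le hk
    linarith
  · intro k hk
    linarith
  · simp

theorem qq_cont (d : ℕ) : Continuous fun x => (qq d).eval x := Polynomial.continuous _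
theorem pp_cont (d : ℕ) : Continuous fun x => (pp d).eval x := Polynomial.continuous _

/-- The quotient. -/
noncomputable def ff (d : ℕ) (x : ℝ) : ℝ := (pp d).eval x / (qq d).eval x

theorem ff_contOn (d : ℕ) : ContinuousOn (ff d) (Set.Iio ((d:ℝ)+1)) := by
  unfold ff
  apply ContinuousOn.div (pp_cont d).continuousOn (qq_cont d).continuousOn
  intro x hx
  exact (qq_pos d x hx).ne'

theorem ff_maximizer (d : ℕ) (_hd : 1 ≤ d) (t : ℝ) (ht0 : 0 ≤ t) (htd : t ≤ d)
    (hne : ff d t ≠ 0) (hmax : ∀ s : ℝ, 0 ≤ s → s ≤ d → |ff d s| ≤ |ff d t|) :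
    (d:ℝ) - 1 < t ∧ t < d := by
  have hq := qq_pos d t (by linarith)
  have hp : (pp d).eval t ≠ 0 := fun h => hne (by simp [ff, h])
  have habs : ∀ s : ℝ, s ≤ d → |ff d s| = |(pp d).eval s| / (qq d).eval s := by
    intro s hs
    rw [ff, abs_div, abs_of_pos (qq_pos d s (by linarith))]
  have key : ∀ s : ℝ, t < s → s ≤ d → |(pp d).eval t| ≤ |(pp d).eval s| → False := by
    intro s hts hsd hle
    have h1 := hmax s (by linarith) hsd
    rw [habs s hsd, habs t htd, div_le_div_iff₀ (qq_pos d s (by linarith)) hq] at h1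
    have h2 := qq_anti d t s hts (by linarith)
    have h3 : 0 < |(pp d).eval t| := abs_pos.mpr hp
    nlinarith
  have htd' : t ≠ d := by
    rintro rfl
    exact hp (pp_zero d d le_rfl)
  have hlt : t < d := lt_of_le_of_ne htd htd'
  refine ⟨?_, hlt⟩
  by_contra hcon
  push Not at hcon
  by_cases h2 : 2 * t < d
  · exact key (d - t) (by linarith) (by linarith) (pp_symm d t).ge
  · push Not at h2
    apply key (t+1) (by linarith) (by linarith)
    have h3 := congrArg abs (pp_shift d t)
    rw [abs_mul, abs_mul, abs_of_neg (show t - d < 0 by linarith),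
      abs_of_pos (show 0 < t + 1 by linarith)] at h3
    have h4 : 0 < |(pp d).eval t| := abs_pos.mpr hp
    by_contra h5
    push Not at h5
    nlinarith [abs_nonneg ((pp d).eval (t+1))]

theorem exists_e (d : ℕ) (hd : 1 ≤ d) : ∃ e : ℝ, (d:ℝ) - 1 < e ∧ e < d ∧
    ∀ s : ℝ, 0 ≤ s → s ≤ d → |ff d s| ≤ |ff d e| := by
  have hd' : (1:ℝ) ≤ d := by exact_mod_cast hd
  obtain ⟨e, he, hmax⟩ := isCompact_Icc.exists_isMaxOn (s := Set.Icc (0:ℝ) d)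
    (f := fun x => |ff d x|) ⟨0, by simp⟩
    (((ff_contOn d).mono (fun x hx => by
      have := hx.2
      simp only [Set.mem_Iio]; linarith)).abs)
  have hmaxx : ∀ s : ℝ, 0 ≤ s → s ≤ d → |ff d s| ≤ |ff d e| := fun s h1 h2 => hmax ⟨h1, h2⟩
  have hne : ff d e ≠ 0 := by
    intro h0
    have h1 := hmaxx ((d:ℝ) - 1/2) (by linarith) (by linarith)
    rw [h0, abs_zero] at h1
    have h2 : ff d ((d:ℝ) - 1/2) < 0 :=
      div_neg_of_neg_of_pos (pp_neg d _ (by linarith) (by linarith)) (qq_pos d _ (by linarith))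
    have := abs_pos.mpr h2.ne
    linarith
  obtain ⟨h1, h2⟩ := ff_maximizer d hd e he.1 he.2 hne hmaxx
  exact ⟨e, h1, h2, hmaxx⟩

/-- The Wronskian. -/
noncomputable def ww (d : ℕ) (x : ℝ) : ℝ :=
  (pp d).derivative.eval x * (qq d).eval x - (pp d).eval x * (qq d).derivative.eval x

theorem ff_hasDeriv (d : ℕ) (x : ℝ) (hx : x < d + 1) :
    HasDerivAt (ff d) (ww d x / (qq d).eval x ^ 2) x :=
  ((pp d).hasDerivAt x).div ((qq d).hasDerivAt x) (qq_pos d x hx).ne'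

theorem prod_erase_eq {d k : ℕ} (g : ℕ → ℝ) (hk : k ∈ Finset.range (d+1)) (h : g k ≠ 0) :
    ∏ j ∈ (Finset.range (d+1)).erase k, g j = (∏ j ∈ Finset.range (d+1), g j) * (1 / g k) := by
  rw [← Finset.mul_prod_erase _ _ hk]
  field_simp

theorem ww_eq (d : ℕ) (x : ℝ) (hx : x < d + 1) (hp : (pp d).eval x ≠ 0) :
    ww d x = (pp d).eval x * (qq d).eval x * ∑ k ∈ Finset.range (d+1),
      (2*(d:ℝ)+1-2*k) / ((x - k) * (2*(d:ℝ)+1-k-x)) := by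
  have h1 : (pp d).derivative.eval x =
      (pp d).eval x * ∑ k ∈ Finset.range (d+1), 1 / (x - (k:ℝ)) := by
    rw [pp_eval] at hp ⊢
    rw [Finset.prod_ne_zero_iff] at hp
    rw [pp, Polynomial.derivative_prod_finset, Polynomial.eval_finsetSum, Finset.mul_sum]
    apply Finset.sum_congr rfl
    intro k hk
    simp only [Polynomial.eval_mul, Polynomial.eval_prod, Polynomial.eval_sub, Polynomial.eval_X,
      Polynomial.eval_C, Polynomial.derivative_sub, Polynomial.derivative_X,
      Polynomial.derivative_C, Polynomial.eval_one, Polynomial.eval_zero]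
    rw [prod_erase_eq (fun j : ℕ => x - (j:ℝ)) hk (hp k hk)]
    ring
  have hq : ∀ k ∈ Finset.range (d+1), 2*(d:ℝ)+1-(k:ℝ) - x ≠ 0 := by
    intro k hk
    have := mem_range_le hk
    apply ne_of_gt
    linarith
  have h2 : (qq d).derivative.eval x =
      - ((qq d).eval x * ∑ k ∈ Finset.range (d+1), 1 / (2*(d:ℝ)+1-(k:ℝ) - x)) := by
    rw [qq_eval]
    rw [qq, Polynomial.derivative_prod_finset, Polynomial.eval_finsetSum, Finset.mul_sum,
      ← Finset.sum_neg_distrib]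
    apply Finset.sum_congr rfl
    intro k hk
    simp only [Polynomial.eval_mul, Polynomial.eval_prod, Polynomial.eval_sub, Polynomial.eval_X,
      Polynomial.eval_C, Polynomial.derivative_sub, Polynomial.derivative_X,
      Polynomial.derivative_C, Polynomial.eval_one, Polynomial.eval_zero]
    rw [prod_erase_eq (fun j : ℕ => 2*(d:ℝ)+1-(j:ℝ) - x) hk (hq k hk)]
    ring
  rw [ww, h1, h2]
  have h3 : ∑ k ∈ Finset.range (d+1), (2*(d:ℝ)+1-2*k) / ((x - k) * (2*(d:ℝ)+1-k-x))
      = ∑ k ∈ Finset.range (d+1), 1 / (x - (k:ℝ))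
        + ∑ k ∈ Finset.range (d+1), 1 / (2*(d:ℝ)+1-(k:ℝ) - x) := by
    rw [← Finset.sum_add_distrib]
    apply Finset.sum_congr rfl
    intro k hk
    have h4 := hq k hk
    rw [pp_eval, Finset.prod_ne_zero_iff] at hp
    have h5 := hp k hk
    field_simp
    ring
  rw [h3]
  ring

theorem ww_pos (d : ℕ) (e : ℝ) (he1 : (d:ℝ) - 1 < e) (he2 : e < d) (hw : ww d e = 0)
    (x : ℝ) (hx1 : e < x) (hx2 : x < d + 1) : 0 < ww d x := by
  have hq := qq_pos d x hx2
  rcases lt_trichotomy x d with h | h | h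
  · have hp := pp_neg d x (by linarith) h
    have hpe := pp_neg d e he1 he2
    have hqe := qq_pos d e (by linarith)
    rw [ww_eq d x hx2 hp.ne, mul_assoc]
    apply mul_pos_of_neg_of_neg hp
    apply mul_neg_of_pos_of_neg hq
    rw [ww_eq d e (by linarith) hpe.ne, mul_eq_zero, mul_eq_zero] at hw
    rcases hw with (hw | hw) | hw
    · exact absurd hw hpe.ne
    · exact absurd hw hqe.ne'
    · rw [← hw]
      apply Finset.sum_lt_sum_of_nonempty (by simp)
      intro k hk
      have hkd := mem_range_le hk
      rw [div_eq_mul_inv, div_eq_mul_inv]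
      apply mul_lt_mul_of_pos_left _ (by linarith)
      have hlt : (e - k) * (2*(d:ℝ)+1-k-e) < (x - k) * (2*(d:ℝ)+1-k-x) := by nlinarith
      by_cases hk' : k = d
      · subst hk'
        apply (inv_lt_inv_of_neg _ _).mpr hlt
        · apply mul_neg_of_neg_of_pos <;> linarith
        · apply mul_neg_of_neg_of_pos <;> linarith
      · have h1 : k + 1 ≤ d := by
          have := Finset.mem_range.mp hk
          omega
        have h2 : (k:ℝ) + 1 ≤ d := by exact_mod_cast h1
        apply inv_strictAnti₀ _ hlt
        apply mul_pos <;> linarith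
  · subst h
    rw [ww, pp_zero d d le_rfl, zero_mul, sub_zero]
    apply mul_pos _ hq
    rw [pp, Finset.prod_range_succ]
    simp only [Polynomial.derivative_mul, Polynomial.derivative_sub, Polynomial.derivative_X,
      Polynomial.derivative_C, Polynomial.eval_add, Polynomial.eval_mul, Polynomial.eval_sub,
      Polynomial.eval_X, Polynomial.eval_C, sub_self, mul_zero, zero_add, sub_zero,
      mul_one, Polynomial.eval_prod]
    apply Finset.prod_pos
    intro k hk
    have h1 : (k:ℝ) < d := by exact_mod_cast Finset.mem_range.mp hk
    linarith
  · have hp := pp_pos d x h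
    rw [ww_eq d x hx2 hp.ne']
    apply mul_pos (mul_pos hp hq)
    apply Finset.sum_pos _ (by simp)
    intro k hk
    have hkd := mem_range_le hk
    apply div_pos (by linarith)
    apply mul_pos <;> linarith

theorem arc (d : ℕ) (hd : 1 ≤ d) (c : ℝ) (hc : 1 ≤ |c|) (hc1 : c ≠ 1) :
    ∃ γ : Set.Icc (0:ℝ) d → ℝ, Continuous γ ∧
      ∀ t, (pp d).eval t.1 * (qq d).eval (γ t) = c * (qq d).eval t.1 * (pp d).eval (γ t) ∧
        0 < ww d (γ t) ∧ (d:ℝ) - 1 < γ t ∧ γ t < d + 1 := by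
  obtain ⟨e, he1, he2, hmax⟩ := exists_e d hd
  have hd' : (1:ℝ) ≤ d := by exact_mod_cast hd
  have hc0 : c ≠ 0 := by rintro rfl; norm_num at hc
  have hfe : ff d e < 0 :=
    div_neg_of_neg_of_pos (pp_neg d _ (by linarith) (by linarith)) (qq_pos d _ (by linarith))
  have hw : ww d e = 0 := by
    have hmin : IsLocalMin (ff d) e := by
      filter_upwards [Ioo_mem_nhds he1 he2] with s hs
      have h1 := hmax s (by linarith [hs.1]) hs.2.le
      have h2 : ff d s < 0 :=
        div_neg_of_neg_of_pos (pp_neg d _ hs.1 hs.2) (qq_pos d _ (by linarith [hs.2]))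
      rw [abs_of_neg h2, abs_of_neg hfe] at h1
      linarith
    have h := hmin.hasDerivAt_eq_zero (ff_hasDeriv d e (by linarith))
    have hq := qq_pos d e (by linarith)
    rw [div_eq_zero_iff] at h
    rcases h with h | h
    · exact h
    · exact absurd h (by positivity)
  have hmono : StrictMonoOn (ff d) (Set.Ioo e (d+1)) := by
    apply strictMonoOn_of_deriv_pos (convex_Ioo _ _)
    · exact (ff_contOn d).mono (fun x hx => hx.2)
    · intro x hx
      rw [interior_Ioo] at hx
      rw [(ff_hasDeriv d x hx.2).deriv]
      have := ww_pos d e he1 he2 hw x hx.1 hx.2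
      have := qq_pos d x hx.2
      positivity
  have hgt : ∀ t : Set.Icc (0:ℝ) d, ff d e < ff d t.1 / c := by
    rintro ⟨t, ht0, htd⟩
    have h1 := hmax t ht0 htd
    rw [abs_of_neg hfe] at h1
    rcases hc.lt_or_eq with h | h
    · have h2 : |ff d t / c| < - ff d e := by
        rw [abs_div, div_lt_iff₀ (by linarith)]
        nlinarith
      have := (abs_lt.mp h2).1
      simpa using this
    · have h3 : c = -1 := by
        rcases abs_eq (by norm_num : (0:ℝ) ≤ 1) |>.mp h.symm with h | h
        · exact absurd h hc1
        · exact h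
      subst h3
      have h4 : ff d t < - ff d e := by
        refine lt_of_le_of_ne ((le_abs_self _).trans h1) ?_
        intro h5
        have h6 : 0 < ff d t := by linarith
        obtain ⟨h7, h8⟩ := ff_maximizer d hd t ht0 htd h6.ne' (by
          intro s hs0 hsd
          rw [abs_of_pos h6, h5, ← abs_of_neg hfe]
          exact hmax s hs0 hsd)
        have h9 : ff d t < 0 :=
          div_neg_of_neg_of_pos (pp_neg d _ h7 h8) (qq_pos d _ (by linarith))
        linarith
      simp only [div_neg, div_one]
      linarith
  have hex : ∀ t : Set.Icc (0:ℝ) d, ∃ y ∈ Set.Ioo e ((d:ℝ)+1), ff d y = ff d t.1 / c := by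
    intro t
    have h1 := hgt t
    set w := ff d t.1 / c with hwdef
    have hqe := qq_pos d e (by linarith)
    have h2 : (pp d).eval e - w * (qq d).eval e < 0 := by
      rw [ff, div_lt_iff₀ hqe] at h1
      linarith
    have h3 : 0 < (pp d).eval ((d:ℝ)+1) - w * (qq d).eval ((d:ℝ)+1) := by
      have : (qq d).eval ((d:ℝ)+1) = 0 := by
        rw [qq_eval]
        exact Finset.prod_eq_zero (i := d) (by simp) (by ring)
      rw [this]
      have := pp_pos d ((d:ℝ)+1) (by linarith)
      linarith
    obtain ⟨y, hy, hy0⟩ := intermediate_value_Ioo (show e ≤ (d:ℝ)+1 by linarith)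
      (f := fun x => (pp d).eval x - w * (qq d).eval x)
      (((pp_cont d).sub (continuous_const.mul (qq_cont d))).continuousOn) ⟨h2, h3⟩
    refine ⟨y, hy, ?_⟩
    have := qq_pos d y hy.2
    rw [ff, div_eq_iff this.ne']
    simp only at hy0
    linarith
  choose γ hγ hγf using hex
  have hgc : Continuous fun t : Set.Icc (0:ℝ) d => ff d t.1 / c := by
    apply Continuous.div_const
    apply (ff_contOn d).comp_continuous continuous_subtype_val
    intro t
    have := t.2.2
    simp only [Set.mem_Iio]
    linarith
  refine ⟨γ, ?_, ?_⟩
  · rw [continuous_iff_continuousAt]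
    intro t0
    rw [ContinuousAt, tendsto_order]
    constructor
    · intro a ha
      by_cases hae : a ≤ e
      · filter_upwards with t
        exact lt_of_le_of_lt hae (hγ t).1
      · push Not at hae
        have hmem : a ∈ Set.Ioo e ((d:ℝ)+1) := ⟨hae, ha.trans (hγ t0).2⟩
        have h1 : ff d a < ff d t0.1 / c := by
          rw [← hγf]
          exact hmono hmem (hγ t0) ha
        filter_upwards [hgc.continuousAt.eventually (lt_mem_nhds h1)] with t ht
        rw [← hγf] at ht
        exact (hmono.lt_iff_lt hmem (hγ t)).mp ht
    · intro a ha
      by_cases hae : (d:ℝ) + 1 ≤ a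
      · filter_upwards with t
        exact lt_of_lt_of_le (hγ t).2 hae
      · push Not at hae
        have hmem : a ∈ Set.Ioo e ((d:ℝ)+1) := ⟨(hγ t0).1.trans ha, hae⟩
        have h1 : ff d t0.1 / c < ff d a := by
          rw [← hγf]
          exact hmono (hγ t0) hmem ha
        filter_upwards [hgc.continuousAt.eventually (gt_mem_nhds h1)] with t ht
        rw [← hγf] at ht
        exact (hmono.lt_iff_lt (hγ t) hmem).mp ht
  · intro t
    refine ⟨?_, ww_pos d e he1 he2 hw _ (hγ t).1 (hγ t).2, he1.trans (hγ t).1, (hγ t).2⟩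
    have h := hγf t
    have h1 := (qq_pos d (γ t) (hγ t).2).ne'
    have h2 := (qq_pos d t.1 (by have := t.2.2; linarith)).ne'
    rw [ff, ff] at h
    field_simp at h
    linarith
/-- The point of the affine chart `z = 1` with parameters `α`, `γ`. -/
noncomputable def pt (d : ℕ) (α γ : ℂ) : Fin 3 → ℂ :=
  ![α / (2*(d:ℂ)+1) * (2*(d:ℂ)+1-γ), (2*(d:ℂ)+1-α) / (2*(d:ℂ)+1) * γ, 1]

/-- Restriction to the line with parameter `α`. -/
noncomputable def VV (d : ℕ) (α : ℂ) : MvPolynomial (Fin 3) ℂ →ₐ[ℂ] Polynomial ℂ :=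
  MvPolynomial.aeval ![Polynomial.C (α / (2*(d:ℂ)+1)) * (Polynomial.C (2*(d:ℂ)+1) - Polynomial.X),
    Polynomial.C ((2*(d:ℂ)+1-α) / (2*(d:ℂ)+1)) * Polynomial.X, 1]

theorem n_ne (d : ℕ) : (2*(d:ℂ)+1) ≠ 0 := by
  have : ((2*d+1 : ℕ) : ℂ) ≠ 0 := Nat.cast_ne_zero.mpr (by omega)
  exact_mod_cast this

theorem VV_eval (d : ℕ) (α γ : ℂ) (A : MvPolynomial (Fin 3) ℂ) :
    (VV d α A).eval γ = MvPolynomial.eval (pt d α γ) A := by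
  have h : (Polynomial.aeval γ).comp (VV d α) = MvPolynomial.aeval (pt d α γ) := by
    apply MvPolynomial.algHom_ext
    intro i
    fin_cases i <;> simp [VV, pt]
  have h1 := DFunLike.congr_fun h A
  simpa [Polynomial.coe_aeval_eq_eval, MvPolynomial.coe_aeval_eq_eval] using h1

theorem pt_symm (d : ℕ) (α γ : ℂ) : pt d α γ = pt d (2*(d:ℂ)+1-γ) (2*(d:ℂ)+1-α) := by
  have := n_ne d
  ext i
  fin_cases i
  · simp [pt]; ring
  · simp [pt]; ring
  · simp [pt]

theorem VV_symm (d : ℕ) (α γ : ℂ) (A : MvPolynomial (Fin 3) ℂ) :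
    (VV d α A).eval γ = (VV d (2*(d:ℂ)+1-γ) A).eval (2*(d:ℂ)+1-α) := by
  rw [VV_eval, VV_eval, ← pt_symm]

theorem VV_natDegree (d : ℕ) (α : ℂ) (A : MvPolynomial (Fin 3) ℂ) :
    (VV d α A).natDegree ≤ A.totalDegree := by
  have h := MvPolynomial.aeval_natDegree_le (m := A.totalDegree) (n := 1) A le_rfl
    ![Polynomial.C (α / (2*(d:ℂ)+1)) * (Polynomial.C (2*(d:ℂ)+1) - Polynomial.X),
    Polynomial.C ((2*(d:ℂ)+1-α) / (2*(d:ℂ)+1)) * Polynomial.X, 1] (by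
      intro i
      fin_cases i
      · refine (Polynomial.natDegree_C_mul_le _ _).trans ?_
        refine (Polynomial.natDegree_sub_le _ _).trans ?_
        rw [Polynomial.natDegree_C, Polynomial.natDegree_X]
        simp
      · refine (Polynomial.natDegree_C_mul_le _ _).trans ?_
        simp
      · simp)
  simpa [VV] using h

theorem VV_R3 (d k : ℕ) (α : ℂ) : VV d α (R3 d k) =
    Polynomial.C (α - k) * (Polynomial.C (2*(d:ℂ)+1-k) - Polynomial.X) := by
  have := n_ne d
  apply Polynomial.funext
  intro γ
  rw [VV_eval]
  simp [R3, pt]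
  field_simp
  ring

/-- complex versions -/
noncomputable def pC (d : ℕ) : Polynomial ℂ := (pp d).map Complex.ofRealHom
/-- complex versions -/
noncomputable def qC (d : ℕ) : Polynomial ℂ := (qq d).map Complex.ofRealHom

theorem pC_eq (d : ℕ) : pC d = ∏ k ∈ Finset.range (d+1), (Polynomial.X - Polynomial.C (k:ℂ)) := by
  simp [pC, pp, Polynomial.map_prod]

theorem qC_eq (d : ℕ) :
    qC d = ∏ k ∈ Finset.range (d+1), (Polynomial.C (2*(d:ℂ)+1-(k:ℂ)) - Polynomial.X) := by
  simp [qC, qq, Polynomial.map_prod]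

theorem map_eval (g : Polynomial ℝ) (x : ℝ) :
    (g.map Complex.ofRealHom).eval (x:ℂ) = ((g.eval x : ℝ) : ℂ) := by
  have := Polynomial.eval_map_apply (f := Complex.ofRealHom) (p := g) x
  simpa using this

theorem VV_P3 (d : ℕ) (α : ℝ) :
    VV d α (P3 d) = Polynomial.C (((pp d).eval α : ℝ) : ℂ) * qC d := by
  rw [P3, map_prod, qC_eq, pp_eval]
  simp only [VV_R3, Finset.prod_mul_distrib]
  rw [← map_prod]
  push_cast
  rfl

theorem Q3_eq (d : ℕ) : Q3 d = ∏ k ∈ Finset.range (d+1), R3 d (2*d+1-k) := by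
  rw [Q3]
  apply Finset.prod_nbij' (fun j => 2*d+1-j) (fun j => 2*d+1-j)
  · intro a ha; simp at ha ⊢; omega
  · intro a ha; simp at ha ⊢; omega
  · intro a ha; simp at ha ⊢; omega
  · intro a ha; simp at ha ⊢; omega
  · intro a ha; simp at ha ⊢; congr 1; omega

theorem VV_Q3 (d : ℕ) (α : ℝ) :
    VV d α (Q3 d) = Polynomial.C (((qq d).eval α : ℝ) : ℂ) * pC d := by
  rw [Q3_eq, map_prod, pC_eq, qq_eval]
  push_cast
  rw [map_prod, ← Finset.prod_mul_distrib]
  apply Finset.prod_congr rfl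
  intro k hk
  have hk' : k ≤ 2*d+1 := by have := Finset.mem_range.mp hk; omega
  rw [VV_R3, Nat.cast_sub hk']
  apply Polynomial.funext
  intro γ
  simp
  ring

theorem VV_h (d : ℕ) (c : ℂ) (α : ℝ) : VV d α (P3 d - C c * Q3 d) =
    Polynomial.C (((pp d).eval α : ℝ) : ℂ) * qC d
      - Polynomial.C (c * (((qq d).eval α : ℝ) : ℂ)) * pC d := by
  rw [map_sub, map_mul, VV_P3, VV_Q3]
  have : VV d α (C c) = Polynomial.C c := by simp [VV]
  rw [this, map_mul, mul_assoc]

theorem VV_h_eval (d : ℕ) (c : ℂ) (α γ : ℝ) : (VV d α (P3 d - C c * Q3 d)).eval (γ:ℂ) =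
    (((pp d).eval α : ℝ) : ℂ) * (((qq d).eval γ : ℝ) : ℂ)
      - c * (((qq d).eval α : ℝ) : ℂ) * (((pp d).eval γ : ℝ) : ℂ) := by
  rw [VV_h]
  simp [pC, qC, map_eval]

theorem R3_totalDegree (d k : ℕ) : (R3 d k).totalDegree ≤ 1 := by
  unfold R3
  have h : ∀ (a : ℂ) (i : Fin 3), (C a * X i : MvPolynomial (Fin 3) ℂ).totalDegree ≤ 1 := by
    intro a i
    refine (totalDegree_mul _ _).trans ?_
    simp
  refine (totalDegree_sub _ _).trans (max_le ((totalDegree_add _ _).trans (max_le ?_ ?_)) ?_) <;>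
  apply h

theorem h_totalDegree (d : ℕ) (c : ℂ) : (P3 d - C c * Q3 d).totalDegree ≤ d + 1 := by
  have hP : (P3 d).totalDegree ≤ d + 1 := by
    rw [P3]
    refine (totalDegree_finsetProd _ _).trans ?_
    refine (Finset.sum_le_card_nsmul _ _ 1 (fun k _ => R3_totalDegree d k)).trans ?_
    simp
  have hQ : (Q3 d).totalDegree ≤ d + 1 := by
    rw [Q3_eq]
    refine (totalDegree_finsetProd _ _).trans ?_
    refine (Finset.sum_le_card_nsmul _ _ 1 (fun k _ => R3_totalDegree d _)).trans ?_
    simp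
  refine (totalDegree_sub _ _).trans (max_le hP ?_)
  refine (totalDegree_mul _ _).trans ?_
  simpa using hQ

theorem real_prod (x : ℝ) (s : Multiset ℂ) (hs : ∀ z ∈ s, ∃ r : ℝ, z = r) :
    ∃ r : ℝ, (s.map (fun a => (x:ℂ) - a)).prod = r := by
  induction s using Multiset.induction_on with
  | empty => exact ⟨1, by simp⟩
  | cons a s ih =>
    obtain ⟨r, hr⟩ := ih (fun z hz => hs z (Multiset.mem_cons_of_mem hz))
    obtain ⟨r', hr'⟩ := hs a (Multiset.mem_cons_self a s)
    refine ⟨(x - r') * r, ?_⟩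
    rw [Multiset.map_cons, Multiset.prod_cons, hr, hr']
    push_cast
    rfl

theorem real_ratio (g : Polynomial ℂ) (hr : ∀ z, g.eval z = 0 → ∃ r : ℝ, z = r) (y : ℝ)
    (hy : g.eval (y:ℂ) ≠ 0) (x : ℝ) : ∃ r : ℝ, g.eval (x:ℂ) = r * g.eval (y:ℂ) := by
  have hs : ∀ z ∈ g.roots, ∃ r : ℝ, z = r := fun z hz => hr z (Polynomial.mem_roots'.mp hz).2
  obtain ⟨rx, hrx⟩ := real_prod x g.roots hs
  obtain ⟨ry, hry⟩ := real_prod y g.roots hs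
  have hsp : g.Splits := IsAlgClosed.splits g
  have ex := hsp.eval_eq_prod_roots (x:ℂ)
  have ey := hsp.eval_eq_prod_roots (y:ℂ)
  rw [hrx] at ex
  rw [hry] at ey
  have : (ry:ℂ) ≠ 0 := by
    intro h
    rw [h, mul_zero] at ey
    exact hy ey
  refine ⟨rx / ry, ?_⟩
  rw [ex, ey]
  push_cast
  field_simp

theorem real_interp (d : ℕ) (g : Polynomial ℂ) (hg : g.natDegree ≤ d) (κ : ℂ) (hκ : κ ≠ 0)
    (f : Fin (d+1) → ℝ) (hf : Function.Injective f)
    (h : ∀ i, ∃ r : ℝ, g.eval (f i : ℂ) = r * κ) (x : ℝ) : ∃ r : ℝ, g.eval (x:ℂ) = r * κ := by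
  have hconj : ∀ (u : Polynomial ℂ) (y : ℝ), (u.map (starRingEnd ℂ)).eval (y:ℂ)
      = (starRingEnd ℂ) (u.eval (y:ℂ)) := by
    intro u y
    have := Polynomial.eval_map_apply (f := starRingEnd ℂ) (p := u) (y:ℂ)
    simpa using this
  set u := Polynomial.C κ⁻¹ * g with hu
  have hud : u.natDegree ≤ d := (Polynomial.natDegree_C_mul_le _ _).trans hg
  have key : u.map (starRingEnd ℂ) = u := by
    rw [← sub_eq_zero]
    apply Polynomial.eq_zero_of_natDegree_lt_card_of_eval_eq_zero _
      (f := fun i => (f i : ℂ)) (fun i j hij => hf (by simpa using hij))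
    · intro i
      obtain ⟨r, hr⟩ := h i
      rw [Polynomial.eval_sub, hconj, hu, Polynomial.eval_mul, Polynomial.eval_C, hr]
      rw [show κ⁻¹ * (r * κ) = r by field_simp]
      simp
    · rw [Fintype.card_fin]
      refine lt_of_le_of_lt (Polynomial.natDegree_sub_le _ _) ?_
      have := Polynomial.natDegree_map_le (p := u) (f := starRingEnd ℂ)
      omega
  have h1 := hconj u x
  rw [key] at h1
  obtain ⟨r, hr⟩ := Complex.conj_eq_iff_real.mp h1.symm
  refine ⟨r, ?_⟩
  rw [← hr, hu, Polynomial.eval_mul, Polynomial.eval_C]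
  field_simp

theorem qq_zero (d : ℕ) (i : ℕ) (hi : i ≤ d) : (qq d).eval (2*(d:ℝ)+1-i) = 0 := by
  rw [qq_eval]
  exact Finset.prod_eq_zero (i := i) (by simp; omega) (by simp)

theorem h_real_ne (d : ℕ) (c : ℂ) (hc : c ≠ 0) (i : ℕ) (hi : i ≤ d) :
    (VV d ((i:ℝ):ℂ) (P3 d - C c * Q3 d)).eval (((2*(d:ℝ)+1 : ℝ)) : ℂ) ≠ 0 := by
  rw [VV_h_eval, pp_zero d i hi]
  have h1 := pp_pos d (2*(d:ℝ)+1) (by have : (0:ℝ) ≤ d := by positivity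
                                      linarith)
  have h2 := qq_pos d i (by have : (i:ℝ) ≤ d := by exact_mod_cast hi
                            linarith)
  have h3 : (((pp d).eval (2*(d:ℝ)+1) : ℝ) : ℂ) ≠ 0 := by exact_mod_cast h1.ne'
  have h4 : (((qq d).eval (i:ℝ) : ℝ) : ℂ) ≠ 0 := by exact_mod_cast h2.ne'
  simp [hc, h3, h4]

/-- A factor is real up to a scalar. -/
theorem factor_real (d : ℕ) (c : ℂ) (hc : c ≠ 0) (A B : MvPolynomial (Fin 3) ℂ)
    (hAB : P3 d - C c * Q3 d = A * B) (hA : A.totalDegree ≤ d) (α γ : ℝ) :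
    ∃ r : ℝ, (VV d α A).eval (γ:ℂ) = r * (VV d 0 A).eval (((2*(d:ℝ)+1 : ℝ)) : ℂ) := by
  have hne : ∀ i : ℕ, i ≤ d → (VV d ((i:ℝ):ℂ) A).eval (((2*(d:ℝ)+1 : ℝ)) : ℂ) ≠ 0 := by
    intro i hi h0
    apply h_real_ne d c hc i hi
    rw [hAB, map_mul, Polynomial.eval_mul, h0, zero_mul]
  have hroots : ∀ i : ℕ, i ≤ d → ∀ z, (VV d ((i:ℝ):ℂ) A).eval z = 0 → ∃ r : ℝ, z = r := by
    intro i hi z hz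
    have h1 : (VV d ((i:ℝ):ℂ) (P3 d - C c * Q3 d)).eval z = 0 := by
      rw [hAB, map_mul, Polynomial.eval_mul, hz, zero_mul]
    have h2 := qq_pos d i (by have : (i:ℝ) ≤ d := by exact_mod_cast hi
                              linarith)
    have h4 : (((qq d).eval (i:ℝ) : ℝ) : ℂ) ≠ 0 := by exact_mod_cast h2.ne'
    rw [VV_h, pp_zero d i hi, pC_eq] at h1
    simp only [Complex.ofReal_zero, map_zero, zero_mul, zero_sub, Polynomial.eval_neg,
      Polynomial.eval_mul, Polynomial.eval_C, neg_eq_zero, mul_eq_zero, hc, h4, false_or,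
      Polynomial.eval_prod, Finset.prod_eq_zero_iff] at h1
    obtain ⟨k, _, hk⟩ := h1
    simp only [Polynomial.eval_sub, Polynomial.eval_X, Polynomial.eval_C] at hk
    exact ⟨k, by rw [sub_eq_zero] at hk; simpa using hk⟩
  have hne0 := hne 0 (Nat.zero_le _)
  have hroots0 := hroots 0 (Nat.zero_le _)
  simp only [Nat.cast_zero, Complex.ofReal_zero] at hne0 hroots0
  have hi : ∀ i : ℕ, i ≤ d → ∀ x : ℝ, ∃ r : ℝ, (VV d ((i:ℝ):ℂ) A).eval (x:ℂ) =
      r * (VV d 0 A).eval (((2*(d:ℝ)+1 : ℝ)) : ℂ) := by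
    intro i hi x
    obtain ⟨r1, hr1⟩ := real_ratio _ (hroots i hi) _ (hne i hi) x
    obtain ⟨r2, hr2⟩ := real_ratio _ hroots0 _ hne0 (2*(d:ℝ)+1-i)
    refine ⟨r1 * r2, ?_⟩
    rw [hr1, VV_symm]
    push_cast at hr2 ⊢
    rw [sub_self, hr2]
    ring
  have h := real_interp d (VV d ((2*(d:ℝ)+1-γ : ℝ) : ℂ) A) ((VV_natDegree _ _ _).trans hA)
    _ hne0 (fun i => 2*(d:ℝ)+1-((i:ℕ):ℝ)) (by
      intro i j hij
      simp only [sub_right_inj, Nat.cast_inj] at hij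
      exact Fin.ext hij) (by
      intro i
      obtain ⟨r, hr⟩ := hi i (by omega) γ
      refine ⟨r, ?_⟩
      rw [← hr, VV_symm]
      push_cast
      simp) (2*(d:ℝ)+1-α)
  obtain ⟨r, hr⟩ := h
  refine ⟨r, ?_⟩
  rw [← hr, VV_symm]
  push_cast
  rfl

theorem c_real (d : ℕ) (c : ℂ) (hc : c ≠ 0) (A B : MvPolynomial (Fin 3) ℂ)
    (hAB : P3 d - C c * Q3 d = A * B) (hA : A.totalDegree ≤ d) (hB : B.totalDegree ≤ d) :
    ∃ r : ℝ, c = r := by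
  obtain ⟨r1, h1⟩ := factor_real d c hc A B hAB hA ((d:ℝ)+1) 0
  obtain ⟨r2, h2⟩ := factor_real d c hc B A (by rw [hAB, mul_comm]) hB ((d:ℝ)+1) 0
  have h3 := VV_h_eval d c ((d:ℝ)+1) 0
  have h4 := VV_h_eval d c 0 (2*(d:ℝ)+1)
  rw [hAB, map_mul, Polynomial.eval_mul] at h3 h4
  have hz1 : (qq d).eval ((d:ℝ)+1) = 0 := by
    have := qq_zero d d le_rfl
    rwa [show 2*(d:ℝ)+1-d = d+1 by ring] at this
  have hz2 : (pp d).eval 0 = 0 := by simpa using pp_zero d 0 (Nat.zero_le _)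
  have hd0 : (0:ℝ) ≤ d := by positivity
  have p1 := pp_pos d ((d:ℝ)+1) (by linarith)
  have p2 := qq_pos d 0 (by linarith)
  have p3 := pp_pos d (2*(d:ℝ)+1) (by linarith)
  rw [h1, h2, hz1] at h3
  rw [hz2] at h4
  simp only [Complex.ofReal_zero, mul_zero, zero_mul, sub_zero, zero_sub] at h3 h4
  set a := (pp d).eval ((d:ℝ)+1)
  set b := (qq d).eval 0
  set e := (pp d).eval (2*(d:ℝ)+1)
  set U := (VV d 0 A).eval (((2*(d:ℝ)+1 : ℝ)) : ℂ)
  set W := (VV d 0 B).eval (((2*(d:ℝ)+1 : ℝ)) : ℂ)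
  have h5 : ((r1*r2*b*e : ℝ) : ℂ) * c = ((-(a*b) : ℝ) : ℂ) := by
    push_cast
    linear_combination ((r1:ℂ)*r2) * h4 - h3
  have h6 : ((r1*r2*b*e : ℝ) : ℂ) ≠ 0 := by
    intro h0
    rw [h0, zero_mul] at h5
    have : (-(a*b) : ℝ) = 0 := by exact_mod_cast h5.symm
    have : 0 < a * b := mul_pos p1 p2
    linarith
  refine ⟨-(a*b) / (r1*r2*b*e), ?_⟩
  rw [Complex.ofReal_div, eq_div_iff h6, mul_comm]
  exact h5
theorem pt_cont (d : ℕ) (A : MvPolynomial (Fin 3) ℂ) {T : Type} [TopologicalSpace T]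
    (u v : T → ℝ) (hu : Continuous u) (hv : Continuous v) :
    Continuous fun t => (VV d (u t) A).eval (v t : ℂ) := by
  simp only [VV_eval]
  apply (MvPolynomial.continuous_eval A).comp
  apply continuous_pi
  intro i
  have hu' : Continuous fun t => (u t : ℂ) := Complex.continuous_ofReal.comp hu
  have hv' : Continuous fun t => (v t : ℂ) := Complex.continuous_ofReal.comp hv
  fin_cases i
  · simp only [pt]
    exact (hu'.div_const _).mul (continuous_const.sub hv')
  · simp only [pt]
    exact ((continuous_const.sub hu').div_const _).mul hv'
  · simp only [pt]
    exact continuous_const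

theorem vanish_false (d : ℕ) (c : ℂ) (A B : MvPolynomial (Fin 3) ℂ)
    (hAB : P3 d - C c * Q3 d = A * B) (hA : A.totalDegree ≤ d)
    (h : ∀ i : ℕ, i ≤ d → (VV d ((i:ℝ):ℂ) A).eval ((d:ℝ):ℂ) = 0) : False := by
  have h0 : VV d (((d:ℝ)+1 : ℝ) : ℂ) A = 0 := by
    apply Polynomial.eq_zero_of_natDegree_lt_card_of_eval_eq_zero _
      (f := fun i : Fin (d+1) => 2*(d:ℂ)+1-((i:ℕ):ℂ))
    · intro i j hij
      simp only [sub_right_inj, Nat.cast_inj] at hij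
      exact Fin.ext hij
    · intro i
      have h1 := h i (by omega)
      rw [VV_symm] at h1
      push_cast at h1 ⊢
      rw [← h1]
      congr 2
      congr 1
      ring
    · rw [Fintype.card_fin]
      have := VV_natDegree d (((d:ℝ)+1 : ℝ) : ℂ) A
      omega
  have h2 := VV_h_eval d c ((d:ℝ)+1) 0
  rw [hAB, map_mul, h0, zero_mul, Polynomial.eval_zero] at h2
  have hz1 : (qq d).eval ((d:ℝ)+1) = 0 := by
    have := qq_zero d d le_rfl
    rwa [show 2*(d:ℝ)+1-d = d+1 by ring] at this
  have hd0 : (0:ℝ) ≤ d := by positivity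
  have p1 := pp_pos d ((d:ℝ)+1) (by linarith)
  have p2 := qq_pos d 0 (by linarith)
  rw [hz1] at h2
  simp only [Complex.ofReal_zero, mul_zero, zero_mul, sub_zero] at h2
  have h3 : (0:ℝ) = (pp d).eval ((d:ℝ)+1) * (qq d).eval 0 := by exact_mod_cast h2
  have := mul_pos p1 p2
  linarith

theorem core (d : ℕ) (hd : 1 ≤ d) (c : ℝ) (hc : 1 ≤ |c|) (hc1 : c ≠ 1)
    (A B : MvPolynomial (Fin 3) ℂ) (hAB : P3 d - C (c:ℂ) * Q3 d = A * B)
    (hA : A.totalDegree ≤ d) (hB : B.totalDegree ≤ d) : False := by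
  have hc0 : c ≠ 0 := by rintro rfl; norm_num at hc
  obtain ⟨γ, hγc, hγ⟩ := arc d hd c hc hc1
  have hcov : ∀ t, (VV d (t.1:ℂ) A).eval (γ t : ℂ) = 0 ∨ (VV d (t.1:ℂ) B).eval (γ t : ℂ) = 0 := by
    intro t
    rw [← mul_eq_zero, ← Polynomial.eval_mul, ← map_mul, ← hAB, VV_h_eval]
    have h := (hγ t).1
    rw [sub_eq_zero]
    exact_mod_cast h
  have hdisj : ∀ t, (VV d (t.1:ℂ) A).eval (γ t : ℂ) = 0 →
      (VV d (t.1:ℂ) B).eval (γ t : ℂ) = 0 → False := by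
    intro t h1 h2
    have h3 : (VV d (t.1:ℂ) (P3 d - C (c:ℂ) * Q3 d)).derivative.eval (γ t : ℂ) = 0 := by
      rw [hAB, map_mul, Polynomial.derivative_mul, Polynomial.eval_add, Polynomial.eval_mul,
        Polynomial.eval_mul, h1, h2]
      simp
    rw [VV_h] at h3
    simp only [Polynomial.derivative_sub, Polynomial.derivative_C_mul, pC, qC,
      Polynomial.derivative_map, Polynomial.eval_sub, Polynomial.eval_mul, Polynomial.eval_C,
      map_eval] at h3
    have h4 : (pp d).eval t.1 * (qq d).derivative.eval (γ t)
        - c * (qq d).eval t.1 * (pp d).derivative.eval (γ t) = 0 := by exact_mod_cast h3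
    obtain ⟨h5, h6, _, _⟩ := hγ t
    have h7 : c * (qq d).eval t.1 * ww d (γ t) = 0 := by
      rw [ww]
      linear_combination (-(qq d).eval (γ t)) * h4 + (qq d).derivative.eval (γ t) * h5
    have h8 := (qq_pos d t.1 (by have := t.2.2; linarith)).ne'
    rcases mul_eq_zero.mp h7 with h | h
    · rcases mul_eq_zero.mp h with h | h
      · exact hc0 h
      · exact h8 h
    · exact h6.ne' h
  have hcA := pt_cont d A (fun t : Set.Icc (0:ℝ) d => t.1) γ continuous_subtype_val hγc
  have hcB := pt_cont d B (fun t : Set.Icc (0:ℝ) d => t.1) γ continuous_subtype_val hγc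
  have hclA : IsClosed {t : Set.Icc (0:ℝ) d | (VV d (t.1:ℂ) A).eval (γ t : ℂ) = 0} :=
    isClosed_eq hcA continuous_const
  have hclB : IsClosed {t : Set.Icc (0:ℝ) d | (VV d (t.1:ℂ) B).eval (γ t : ℂ) = 0} :=
    isClosed_eq hcB continuous_const
  have hcompl : {t : Set.Icc (0:ℝ) d | (VV d (t.1:ℂ) A).eval (γ t : ℂ) = 0}
      = {t : Set.Icc (0:ℝ) d | (VV d (t.1:ℂ) B).eval (γ t : ℂ) = 0}ᶜ := by
    ext t
    simp only [Set.mem_setOf_eq, Set.mem_compl_iff]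
    exact ⟨fun h1 h2 => hdisj t h1 h2, fun h => (hcov t).resolve_right h⟩
  have hclopen : IsClopen {t : Set.Icc (0:ℝ) d | (VV d (t.1:ℂ) A).eval (γ t : ℂ) = 0} := by
    refine ⟨hclA, ?_⟩
    rw [hcompl]
    exact hclB.isOpen_compl
  have hint : ∀ i : ℕ, ∀ hi : i ≤ d, γ ⟨(i:ℝ), by positivity, by exact_mod_cast hi⟩ = d := by
    intro i hi
    obtain ⟨h1, _, h3, h4⟩ := hγ ⟨(i:ℝ), by positivity, by exact_mod_cast hi⟩
    set y := γ ⟨(i:ℝ), by positivity, by exact_mod_cast hi⟩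
    simp only [pp_zero d i hi, zero_mul] at h1
    have hid : (i:ℝ) ≤ d := by exact_mod_cast hi
    have h8 := (qq_pos d i (by linarith)).ne'
    have h9 : (pp d).eval y = 0 := by
      rcases mul_eq_zero.mp h1.symm with h | h
      · rcases mul_eq_zero.mp h with h | h
        · exact absurd h hc0
        · exact absurd h h8
      · exact h
    obtain ⟨k, hk, hyk⟩ := pp_root d y h9
    rw [hyk] at h3 ⊢
    have h10 : d < k + 1 := by
      have : (d:ℝ) < k + 1 := by linarith
      exact_mod_cast this
    have : k = d := by omega
    rw [this]
  have hpre : PreconnectedSpace (Set.Icc (0:ℝ) d) :=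
    Subtype.preconnectedSpace isPreconnected_Icc
  rcases isClopen_iff.mp hclopen with h | h
  · apply vanish_false d c B A (by rw [hAB, mul_comm]) hB
    intro i hi
    have h1 := hcov ⟨(i:ℝ), by positivity, by exact_mod_cast hi⟩
    rw [hint i hi] at h1
    rcases h1 with h1 | h1
    · exfalso
      have : (⟨(i:ℝ), by positivity, by exact_mod_cast hi⟩ : Set.Icc (0:ℝ) d) ∈
        {t : Set.Icc (0:ℝ) d | (VV d (t.1:ℂ) A).eval (γ t : ℂ) = 0} := by
        simp only [Set.mem_setOf_eq]
        rw [hint i hi]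
        exact h1
      rw [h] at this
      exact this
    · exact h1
  · apply vanish_false d c A B hAB hA
    intro i hi
    have : (⟨(i:ℝ), by positivity, by exact_mod_cast hi⟩ : Set.Icc (0:ℝ) d) ∈
        {t : Set.Icc (0:ℝ) d | (VV d (t.1:ℂ) A).eval (γ t : ℂ) = 0} := by
      rw [h]
      trivial
    simp only [Set.mem_setOf_eq] at this
    rw [hint i hi] at this
    exact this

theorem pos_totalDegree {A : MvPolynomial (Fin 3) ℂ} (hA0 : A ≠ 0) (hA : ¬ IsUnit A) :
    1 ≤ A.totalDegree := by
  by_contra h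
  have h0 : A.totalDegree = 0 := by omega
  rw [totalDegree_eq_zero_iff_eq_C] at h0
  apply hA
  rw [h0]
  have : A.coeff 0 ≠ 0 := by
    intro h1
    rw [h1, C_0] at h0
    exact hA0 h0
  exact (isUnit_iff_ne_zero.mpr this).map C

theorem not_unit_of_eval {A : MvPolynomial (Fin 3) ℂ} (d : ℕ) (α γ : ℂ)
    (h : (VV d α A).eval γ = 0) : ¬ IsUnit A := by
  intro hu
  rw [VV_eval] at h
  have := hu.map (MvPolynomial.eval (pt d α γ))
  rw [h] at this
  exact not_isUnit_zero this

theorem irred_big (d : ℕ) (hd : 1 ≤ d) (c : ℂ) (hc : 1 ≤ ‖c‖) (hc1 : c ≠ 1) :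
    Irreducible (P3 d - C c * Q3 d) := by
  have hc0 : c ≠ 0 := by rintro rfl; norm_num at hc
  have hne : P3 d - C c * Q3 d ≠ 0 := by
    intro h
    apply h_real_ne d c hc0 0 (Nat.zero_le _)
    rw [h, map_zero, Polynomial.eval_zero]
  refine ⟨?_, ?_⟩
  · apply not_unit_of_eval d ((0:ℝ):ℂ) ((0:ℝ):ℂ)
    rw [VV_h_eval]
    have hz2 : (pp d).eval 0 = 0 := by simpa using pp_zero d 0 (Nat.zero_le _)
    rw [hz2]
    simp
  · intro A B hAB
    by_contra hcon
    push Not at hcon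
    obtain ⟨hA, hB⟩ := hcon
    have hA0 : A ≠ 0 := by rintro rfl; rw [zero_mul] at hAB; exact hne hAB
    have hB0 : B ≠ 0 := by rintro rfl; rw [mul_zero] at hAB; exact hne hAB
    have h1 := pos_totalDegree hA0 hA
    have h2 := pos_totalDegree hB0 hB
    have h3 := h_totalDegree d c
    rw [hAB, totalDegree_mul_of_isDomain hA0 hB0] at h3
    have hA' : A.totalDegree ≤ d := by omega
    have hB' : B.totalDegree ≤ d := by omega
    obtain ⟨r, rfl⟩ := c_real d c hc0 A B hAB hA' hB'
    apply core d hd r _ _ A B hAB hA' hB'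
    · simpa using hc
    · rintro rfl
      exact hc1 (by simp)

/-- Exchange of `x` and `y`. -/
noncomputable def sw : MvPolynomial (Fin 3) ℂ ≃ₐ[ℂ] MvPolynomial (Fin 3) ℂ :=
  renameEquiv ℂ (Equiv.swap 0 1)

theorem sw_R3 (d k : ℕ) (hk : k ≤ 2*d+1) : sw (R3 d k) = R3 d (2*d+1-k) := by
  have h2 : Equiv.swap (0 : Fin 3) 1 2 = 2 := by decide
  simp only [sw, R3, renameEquiv_apply, map_sub, map_add, map_mul, rename_C, rename_X,
    Equiv.swap_apply_left, Equiv.swap_apply_right, h2, Nat.cast_sub hk]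
  push_cast
  simp only [map_sub, map_add, map_mul]
  ring

theorem sw_P3 (d : ℕ) : sw (P3 d) = Q3 d := by
  rw [Q3_eq, P3, map_prod]
  apply Finset.prod_congr rfl
  intro k hk
  exact sw_R3 d k (by have := Finset.mem_range.mp hk; omega)

theorem sw_Q3 (d : ℕ) : sw (Q3 d) = P3 d := by
  rw [Q3_eq, P3, map_prod]
  apply Finset.prod_congr rfl
  intro k hk
  have := Finset.mem_range.mp hk
  rw [sw_R3 d _ (by omega)]
  congr 1
  omega

theorem sw_C (c : ℂ) : sw (C c) = C c := by
  simp [sw]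

theorem irred_all (d : ℕ) (hd : 1 ≤ d) (c : ℂ) (hc0 : c ≠ 0) (hc1 : c ≠ 1) :
    Irreducible (P3 d - C c * Q3 d) := by
  by_cases hc : 1 ≤ ‖c‖
  · exact irred_big d hd c hc hc1
  · push Not at hc
    have h1 := irred_big d hd c⁻¹ (by
      rw [norm_inv]
      exact (one_le_inv₀ (norm_pos_iff.mpr hc0)).mpr hc.le) (by simpa using hc1)
    have h2 : Irreducible (sw (P3 d - C c⁻¹ * Q3 d)) :=
      (MulEquiv.irreducible_iff sw).mpr h1
    rw [map_sub, map_mul, sw_P3, sw_Q3, sw_C] at h2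
    have h3 : P3 d - C c * Q3 d = C (-c) * (Q3 d - C c⁻¹ * P3 d) := by
      have : (C c * C c⁻¹ : MvPolynomial (Fin 3) ℂ) = 1 := by
        rw [← C_mul, mul_inv_cancel₀ hc0, C_1]
      rw [C_neg]
      linear_combination (-(P3 d)) * this
    rw [h3]
    have hu : IsUnit (C (-c) : MvPolynomial (Fin 3) ℂ) :=
      (isUnit_iff_ne_zero.mpr (neg_ne_zero.mpr hc0)).map C
    exact (irreducible_isUnit_mul hu).mpr h2

theorem sub_dvd (g : MvPolynomial (Fin 3) ℂ) : (X 0 - X 1) ∣ g - sw g := by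
  rw [← Ideal.mem_span_singleton, ← Ideal.Quotient.eq]
  have h : (Ideal.Quotient.mkₐ ℂ (Ideal.span {(X 0 - X 1 : MvPolynomial (Fin 3) ℂ)})) =
      (Ideal.Quotient.mkₐ ℂ (Ideal.span {(X 0 - X 1 : MvPolynomial (Fin 3) ℂ)})).comp
        (sw : MvPolynomial (Fin 3) ℂ →ₐ[ℂ] MvPolynomial (Fin 3) ℂ) := by
    have h01 : (Ideal.Quotient.mkₐ ℂ (Ideal.span {(X 0 - X 1 : MvPolynomial (Fin 3) ℂ)})) (X 0) =
      (Ideal.Quotient.mkₐ ℂ (Ideal.span {(X 0 - X 1 : MvPolynomial (Fin 3) ℂ)})) (X 1) := by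
      simp only [Ideal.Quotient.mkₐ_eq_mk]
      rw [Ideal.Quotient.eq]
      exact Ideal.mem_span_singleton_self _
    have h2 : Equiv.swap (0 : Fin 3) 1 2 = 2 := by decide
    apply MvPolynomial.algHom_ext
    intro i
    rw [AlgHom.comp_apply]
    fin_cases i
    · simpa [sw] using h01
    · simpa [sw] using h01.symm
    · simp [sw, h2]
  exact DFunLike.congr_fun h g

theorem not_irred_one (d : ℕ) (hd : 1 ≤ d) : ¬ Irreducible (P3 d - C 1 * Q3 d) := by
  intro hirr
  obtain ⟨G, hG⟩ := sub_dvd (P3 d)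
  rw [sw_P3] at hG
  have hG' : P3 d - C 1 * Q3 d = (X 0 - X 1) * G := by rw [← hG, C_1, one_mul]
  have hn := n_ne d
  rcases hirr.isUnit_or_isUnit hG' with h | h
  · refine not_unit_of_eval d (0:ℂ) (0:ℂ) ?_ h
    rw [VV_eval]
    simp [pt]
  · have h1 := VV_h_eval d 1 0 (d : ℝ)
    rw [hG', map_mul, Polynomial.eval_mul, pp_zero d d le_rfl] at h1
    have hz2 : (pp d).eval 0 = 0 := by simpa using pp_zero d 0 (Nat.zero_le _)
    rw [hz2] at h1
    simp only [Complex.ofReal_zero, mul_zero, zero_mul, sub_zero, mul_eq_zero] at h1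
    rcases h1 with h1 | h1
    · rw [VV_eval] at h1
      simp [pt, hn] at h1
      omega
    · exact not_unit_of_eval d _ _ h1 h

theorem not_irred_zero (d : ℕ) (hd : 1 ≤ d) : ¬ Irreducible (P3 d - C 0 * Q3 d) := by
  intro hirr
  rw [C_0, zero_mul, sub_zero, P3, Finset.prod_range_succ] at hirr
  rcases hirr.isUnit_or_isUnit rfl with h | h
  · refine not_unit_of_eval d 0 0 ?_ h
    rw [map_prod, Polynomial.eval_prod]
    apply Finset.prod_eq_zero (i := 0) (by simp; omega)
    rw [VV_R3]
    simp
  · refine not_unit_of_eval d d 0 ?_ h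
    rw [VV_R3]
    simp

/-- For `c ∈ ℂ`, the homogeneous polynomial `P - cQ` is irreducible in `ℂ[x,y,z]`
if and only if `c ∉ {0,1}`: among the fibers of `F` over `ℂ`, exactly the fibers
over `0` and `1` are reducible. -/
theorem stmt11 (d : ℕ) (hd : 1 ≤ d) (c : ℂ) :
    Irreducible (P3 d - C c * Q3 d) ↔ (c ≠ 0 ∧ c ≠ 1) := by
  constructor
  · intro h
    refine ⟨?_, ?_⟩
    · rintro rfl
      exact not_irred_zero d hd h
    · rintro rfl
      exact not_irred_one d hd h
  · rintro ⟨h0, h1⟩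
    exact irred_all d hd c h0 h1
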